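/- Let (Γ,+,d) be a metric Abelian monoid with homogeneous pseudometric d, and let φ be an admissible function with φ > 0. Assume the uniformly bounded defect property: there exists C > 0 such that for every quasi-linear sequence γ̄ with defect bounded by C'·φ for some C' ≥ 0, there exists a quasi-linear sequence γ̄' with defect bounded by C·φ and dista(γ̄,γ̄') = 0. Then the space Qlin_φ(Γ,d) of all quasi-linear sequences with defect bounded by some multiple of φ, equipped with the asymptotic distance dista, is a complete pseudometric space: every sequence (γ̄ᵢ) in Qlin_φ(Γ,d) that is Cauchy with respect to dista admits η̄ ∈ Qlin_φ(Γ,d) with dista(γ̄ᵢ, η̄) → 0 as i → ∞. -/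

import Mathlib

open MeasureTheory Filter

/-- A pseudometric on `Γ`: reflexive-zero, symmetric, triangle inequality. -/
def IsPseudoMetric {Γ : Type*} (d : Γ → Γ → ℝ) : Prop :=
  (∀ x, d x x = 0) ∧ (∀ x y, d x y = d y x) ∧ (∀ x y z, d x z ≤ d x y + d y z)

/-- A metric Abelian monoid: an additive commutative monoid with a pseudometric
for which addition is 1-Lipschitz in each argument. -/
def IsMetricAbelianMonoid {Γ : Type*} [AddCommMonoid Γ] (d : Γ → Γ → ℝ) : Prop :=
  IsPseudoMetric d ∧ ∀ a b c : Γ, d (a + b) (a + c) ≤ d b c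

/-- `φ : [1,∞) → [0,∞)` is admissible with constant `D ≥ 0`: non-decreasing,
summable against `dt/t²`, and `s·∫_s^∞ φ(t)/t² dt ≤ (D/8)·φ(s)` for all `s ≥ 1`. -/
def AdmissibleWith (φ : ℝ → ℝ) (D : ℝ) : Prop :=
  (∀ t, 1 ≤ t → 0 ≤ φ t) ∧ MonotoneOn φ (Set.Ici 1) ∧ 0 ≤ D ∧
  (∀ s, 1 ≤ s → IntegrableOn (fun t => φ t / t ^ 2) (Set.Ioi s)) ∧
  (∀ s, 1 ≤ s → s * ∫ t in Set.Ioi s, φ t / t ^ 2 ≤ D / 8 * φ s)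

def Admissible (φ : ℝ → ℝ) : Prop := ∃ D, AdmissibleWith φ D

/-- A sequence `γ : ℕ → Γ` is quasi-linear with defect bounded by `φ`
(with respect to the pseudometric `d`). -/
def QuasiLinear {Γ : Type*} [AddCommMonoid Γ] (d : Γ → Γ → ℝ) (φ : ℝ → ℝ)
    (γ : ℕ → Γ) : Prop :=
  γ 0 = 0 ∧ ∀ m n : ℕ, 1 ≤ m → 1 ≤ n →
    d (γ (m + n)) (γ m + γ n) ≤ φ ((m + n : ℕ) : ℝ)

/-- The asymptotic distance `lim_{n→∞} d(γ₁(n),γ₂(n))/n`, realized as a `limsup`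
(for quasi-linear sequences the limit exists, so this is that limit). -/
noncomputable def dista {Γ : Type*} (d : Γ → Γ → ℝ) (γ₁ γ₂ : ℕ → Γ) : ℝ :=
  Filter.limsup (fun n : ℕ => d (γ₁ n) (γ₂ n) / n) Filter.atTop

lemma qlin_nonneg {Γ : Type*} {d : Γ → Γ → ℝ} (h : IsPseudoMetric d) (x y : Γ) : 0 ≤ d x y := by
  obtain ⟨h0, hs, ht⟩ := h
  have := ht x y x
  rw [h0, hs y x] at this
  linarith

lemma qlin_add_le {Γ : Type*} [AddCommMonoid Γ] {d : Γ → Γ → ℝ} (h : IsMetricAbelianMonoid d)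
    (a b x y : Γ) : d (a + b) (x + y) ≤ d a x + d b y := by
  obtain ⟨⟨h0, hs, ht⟩, hl⟩ := h
  have h1 := hl a b y
  have h2 := hl y a x
  rw [add_comm y a, add_comm y x] at h2
  linarith [ht (a + b) (a + y) (x + y)]

lemma qlin_step {φ : ℝ → ℝ} {D : ℝ} (hφ : AdmissibleWith φ D) (s : ℝ) (hs : 1 ≤ s) :
    φ s / (2 * s) + ∫ t in Set.Ioi (2 * s), φ t / t ^ 2 ≤ ∫ t in Set.Ioi s, φ t / t ^ 2 := by
  obtain ⟨h0, hm, hD, hi, hb⟩ := hφ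
  have hs2 : s ≤ 2 * s := by linarith
  have hU : Set.Ioi s = Set.Ioc s (2 * s) ∪ Set.Ioi (2 * s) := (Set.Ioc_union_Ioi_eq_Ioi hs2).symm
  have hint := hi s hs
  have hI1 : IntegrableOn (fun t => φ t / t ^ 2) (Set.Ioc s (2 * s)) :=
    hint.mono_set Set.Ioc_subset_Ioi_self
  have e : ∫ t in Set.Ioi s, φ t / t ^ 2 =
      (∫ t in Set.Ioc s (2 * s), φ t / t ^ 2) + ∫ t in Set.Ioi (2 * s), φ t / t ^ 2 := by
    rw [hU, setIntegral_union (Set.Ioc_disjoint_Ioi le_rfl) measurableSet_Ioi hI1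
      (hi _ (by linarith))]
  rw [e]
  gcongr
  rw [← intervalIntegral.integral_of_le hs2]
  have hpos : ∀ t ∈ Set.uIcc s (2 * s), t ≠ 0 := by
    intro t ht
    rw [Set.uIcc_of_le hs2] at ht
    have := ht.1
    exact (by linarith : (0 : ℝ) < t).ne'
  have hder : ∫ t in s..(2 * s), φ s / t ^ 2 = φ s / (2 * s) := by
    rw [intervalIntegral.integral_eq_sub_of_hasDerivAt (f := fun t => - φ s / t)]
    · field_simp
      ring
    · intro t ht
      have h1 := (hasDerivAt_inv (hpos t ht)).const_mul (- φ s)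
      refine (h1.congr_deriv ?_)
      have := hpos t ht
      field_simp
    · apply ContinuousOn.intervalIntegrable
      apply ContinuousOn.div continuousOn_const (by fun_prop)
      intro t ht
      exact pow_ne_zero _ (hpos t ht)
  rw [← hder]
  apply intervalIntegral.integral_mono_on hs2
  · apply ContinuousOn.intervalIntegrable
    apply ContinuousOn.div continuousOn_const (by fun_prop)
    intro t ht
    exact pow_ne_zero _ (hpos t ht)
  · rw [intervalIntegrable_iff_integrableOn_Ioc_of_le hs2]
    exact hI1
  · intro t ht
    have := hm (Set.mem_Ici.2 hs) (Set.mem_Ici.2 (hs.trans ht.1)) ht.1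
    gcongr

lemma qlin_int_nonneg {φ : ℝ → ℝ} {D : ℝ} (hφ : AdmissibleWith φ D) (s : ℝ) (hs : 1 ≤ s) :
    0 ≤ ∫ t in Set.Ioi s, φ t / t ^ 2 := by
  apply setIntegral_nonneg measurableSet_Ioi
  intro t ht
  have := hφ.1 t (hs.trans (le_of_lt ht))
  positivity

lemma qlin_sum {φ : ℝ → ℝ} {D : ℝ} (hφ : AdmissibleWith φ D) (s : ℝ) (hs : 1 ≤ s) (k : ℕ) :
    ∑ j ∈ Finset.range k, φ (2 ^ j * s) / 2 ^ j ≤ D / 4 * φ s := by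
  have key : ∑ j ∈ Finset.range k, φ (2 ^ j * s) / 2 ^ j ≤
      2 * s * ((∫ t in Set.Ioi s, φ t / t ^ 2) - ∫ t in Set.Ioi (2 ^ k * s), φ t / t ^ 2) := by
    induction k with
    | zero => simp
    | succ k ih =>
      rw [Finset.sum_range_succ]
      have h2 : (1 : ℝ) ≤ 2 ^ k := one_le_pow₀ (by norm_num)
      have h1 := qlin_step hφ (2 ^ k * s) (by nlinarith)
      rw [show (2 : ℝ) * (2 ^ k * s) = 2 ^ (k + 1) * s by ring] at h1
      have e : φ (2 ^ k * s) / 2 ^ k = 2 * s * (φ (2 ^ k * s) / (2 ^ (k + 1) * s)) := by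
        field_simp
        ring
      rw [e]
      have : 0 ≤ 2 * s := by linarith
      nlinarith
  have h2 : (1 : ℝ) ≤ 2 ^ k := one_le_pow₀ (by norm_num)
  have h3 := qlin_int_nonneg hφ (2 ^ k * s) (by nlinarith)
  have h4 := hφ.2.2.2.2 s hs
  nlinarith

lemma qlin_sublinear {φ : ℝ → ℝ} {D : ℝ} (hφ : AdmissibleWith φ D) :
    Tendsto (fun n : ℕ => φ n / n) atTop (nhds 0) := by
  have hI : Tendsto (fun n : ℕ => ∫ t in Set.Ioi (n : ℝ), φ t / t ^ 2) atTop (nhds 0) := by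
    have h1 := intervalIntegral_tendsto_integral_Ioi 1 (hφ.2.2.2.1 1 le_rfl)
      (tendsto_natCast_atTop_atTop (R := ℝ))
    have h2 := h1.const_sub (∫ t in Set.Ioi (1 : ℝ), φ t / t ^ 2)
    rw [sub_self] at h2
    refine h2.congr' ?_
    filter_upwards [eventually_ge_atTop 1] with n hn
    have hn' : (1 : ℝ) ≤ n := by exact_mod_cast hn
    rw [intervalIntegral.integral_of_le hn', ← Set.Ioc_union_Ioi_eq_Ioi hn',
      setIntegral_union (Set.Ioc_disjoint_Ioi le_rfl) measurableSet_Ioi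
        ((hφ.2.2.2.1 1 le_rfl).mono_set Set.Ioc_subset_Ioi_self) (hφ.2.2.2.1 n hn')]
    ring
  have hI2 := hI.const_mul 2
  rw [mul_zero] at hI2
  refine squeeze_zero' ?_ ?_ hI2
  · filter_upwards [eventually_ge_atTop 1] with n hn
    have hn' : (1 : ℝ) ≤ n := by exact_mod_cast hn
    have := hφ.1 n hn'
    positivity
  · filter_upwards [eventually_ge_atTop 1] with n hn
    have hn' : (1 : ℝ) ≤ n := by exact_mod_cast hn
    have h1 := qlin_step hφ n hn'
    have h2 := qlin_int_nonneg hφ (2 * n) (by linarith)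
    have e : φ n / n = 2 * (φ n / (2 * n)) := by field_simp
    rw [e]
    linarith

lemma qlin_bounded {φ : ℝ → ℝ} {D : ℝ} (hφ : AdmissibleWith φ D) (a : ℕ → ℝ) (c : ℝ) (hc : 0 ≤ c)
    (ha : ∀ n, 0 ≤ a n)
    (hq : ∀ m n : ℕ, 1 ≤ m → 1 ≤ n → a (m + n) ≤ a m + a n + c * φ ((m + n : ℕ) : ℝ)) :
    ∃ B, ∀ n, a n / n ≤ B := by
  have key : ∀ k : ℕ, ∀ n : ℕ, 1 ≤ n → n ≤ 2 ^ k →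
      a n ≤ 2 ^ k * (a 1 + c * ∑ j ∈ Finset.range (k + 1), φ (2 ^ j * 1) / 2 ^ j) := by
    intro k
    have hp : ∀ j : ℕ, 0 ≤ φ (2 ^ j * 1) := fun j => hφ.1 _ (by
      rw [mul_one]; exact one_le_pow₀ (by norm_num))
    induction k with
    | zero =>
      intro n h1 h2
      have : n = 1 := by simp at h2; omega
      subst this
      have := mul_nonneg hc (hp 0)
      simp at this ⊢
      linarith
    | succ k ih =>
      intro n h1 h2
      rw [Finset.sum_range_succ]
      set S := ∑ j ∈ Finset.range (k + 1), φ (2 ^ j * 1) / 2 ^ j with hS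
      have hS0 : 0 ≤ S := Finset.sum_nonneg (fun j _ => div_nonneg (hp j) (by positivity))
      have e : (2 : ℝ) ^ (k + 1) * (a 1 + c * (S + φ (2 ^ (k + 1) * 1) / 2 ^ (k + 1))) =
          2 * (2 ^ k * (a 1 + c * S)) + c * φ (2 ^ (k + 1) * 1) := by
        field_simp
        ring
      rw [e]
      have hcp := mul_nonneg hc (hp (k + 1))
      have hcS := mul_nonneg hc hS0
      have ha1 := ha 1
      have hX : 0 ≤ 2 ^ k * (a 1 + c * S) := by positivity
      rw [pow_succ] at h2
      rcases Nat.lt_or_ge 1 n with hn | hn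
      · have q := hq (n / 2) (n - n / 2) (by omega) (by omega)
        have b1 := ih (n / 2) (by omega) (by omega)
        have b2 := ih (n - n / 2) (by omega) (by omega)
        rw [show n / 2 + (n - n / 2) = n by omega] at q
        have hle : (n : ℝ) ≤ 2 ^ (k + 1) * 1 := by
          rw [mul_one, pow_succ]; exact_mod_cast h2
        have h1' : (1 : ℝ) ≤ n := by exact_mod_cast h1
        have b3 := hφ.2.1 (Set.mem_Ici.2 h1') (Set.mem_Ici.2 (h1'.trans hle)) hle
        have b4 := mul_le_mul_of_nonneg_left b3 hc
        linarith
      · have b1 := ih n h1 (hn.trans Nat.one_le_two_pow)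
        linarith
  set A := a 1 + c * (D / 4 * φ 1) with hA
  have hA0 : 0 ≤ A := by
    have := hφ.1 1 le_rfl
    have := hφ.2.2.1
    have := ha 1
    positivity
  refine ⟨2 * A, fun n => ?_⟩
  rcases Nat.eq_zero_or_pos n with rfl | hn
  · simp; exact hA0
  have hnr : (0 : ℝ) < n := by exact_mod_cast hn
  rw [div_le_iff₀ hnr]
  have hlt := Nat.lt_pow_succ_log_self (b := 2) (by norm_num) n
  have hle := Nat.pow_log_le_self 2 (x := n) (by omega)
  have b := key (Nat.log 2 n + 1) n hn hlt.le
  have s := mul_le_mul_of_nonneg_left (qlin_sum hφ 1 le_rfl (Nat.log 2 n + 1 + 1)) hc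
  have hle' : (2 : ℝ) ^ (Nat.log 2 n) ≤ n := by exact_mod_cast hle
  calc a n ≤ _ := b
    _ ≤ 2 ^ (Nat.log 2 n + 1) * A :=
        mul_le_mul_of_nonneg_left (by rw [hA]; linarith) (by positivity)
    _ = 2 * A * 2 ^ (Nat.log 2 n) := by ring
    _ ≤ 2 * A * n := by gcongr

lemma qlin_pair_bounded {Γ : Type*} [AddCommMonoid Γ] {d : Γ → Γ → ℝ}
    (h : IsMetricAbelianMonoid d) {φ : ℝ → ℝ} {D : ℝ} (hφ : AdmissibleWith φ D)
    {γ₁ γ₂ : ℕ → Γ} {c₁ c₂ : ℝ} (hc₁ : 0 ≤ c₁) (hc₂ : 0 ≤ c₂)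
    (h₁ : QuasiLinear d (fun t => c₁ * φ t) γ₁) (h₂ : QuasiLinear d (fun t => c₂ * φ t) γ₂) :
    ∃ B, ∀ n : ℕ, d (γ₁ n) (γ₂ n) / n ≤ B := by
  apply qlin_bounded hφ (fun n => d (γ₁ n) (γ₂ n)) (c₁ + c₂) (by positivity)
    (fun n => qlin_nonneg h.1 _ _)
  intro m n hm hn
  have a1 := h₁.2 m n hm hn
  have a2 := h₂.2 m n hm hn
  have a3 := qlin_add_le h (γ₁ m) (γ₁ n) (γ₂ m) (γ₂ n)
  have t1 := h.1.2.2 (γ₁ (m + n)) (γ₁ m + γ₁ n) (γ₂ (m + n))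
  have t2 := h.1.2.2 (γ₁ m + γ₁ n) (γ₂ m + γ₂ n) (γ₂ (m + n))
  rw [h.1.2.1 (γ₂ m + γ₂ n)] at t2
  simp only at *
  linarith

lemma qlin_ev {Γ : Type*} [AddCommMonoid Γ] {d : Γ → Γ → ℝ}
    (h : IsMetricAbelianMonoid d) {φ : ℝ → ℝ} {D : ℝ} (hφ : AdmissibleWith φ D)
    {γ₁ γ₂ : ℕ → Γ} {c₁ c₂ : ℝ} (hc₁ : 0 ≤ c₁) (hc₂ : 0 ≤ c₂)
    (h₁ : QuasiLinear d (fun t => c₁ * φ t) γ₁) (h₂ : QuasiLinear d (fun t => c₂ * φ t) γ₂)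
    {ε : ℝ} (hε : dista d γ₁ γ₂ < ε) : ∀ᶠ n : ℕ in atTop, d (γ₁ n) (γ₂ n) ≤ ε * n := by
  obtain ⟨B, hB⟩ := qlin_pair_bounded h hφ hc₁ hc₂ h₁ h₂
  have hb : IsBoundedUnder (· ≤ ·) atTop (fun n : ℕ => d (γ₁ n) (γ₂ n) / n) :=
    isBoundedUnder_of ⟨B, hB⟩
  have := eventually_lt_of_limsup_lt hε hb
  filter_upwards [this, eventually_ge_atTop 1] with n hn h1
  have hnr : (0 : ℝ) < n := by exact_mod_cast h1
  exact ((div_lt_iff₀ hnr).1 hn).le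

lemma qlin_dyadic {Γ : Type*} [AddCommMonoid Γ] {d : Γ → Γ → ℝ}
    (h : IsMetricAbelianMonoid d)
    (hhom : ∀ (n : ℕ) (x y : Γ), d (n • x) (n • y) = (n : ℝ) * d x y)
    {φ : ℝ → ℝ} {D : ℝ} (hφ : AdmissibleWith φ D)
    {γ : ℕ → Γ} {c : ℝ} (hc : 0 ≤ c)
    (hq : QuasiLinear d (fun t => c * φ t) γ) (n : ℕ) (hn : 1 ≤ n) (k : ℕ) :
    d (γ (2 ^ k * n)) (2 ^ k • γ n) ≤ 2 ^ k * (c * (D / 4 * φ n)) := by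
  have hn' : (1 : ℝ) ≤ n := by exact_mod_cast hn
  have key : d (γ (2 ^ k * n)) (2 ^ k • γ n) ≤
      2 ^ k * (c * ∑ j ∈ Finset.range (k + 1), φ (2 ^ j * n) / 2 ^ j) := by
    induction k with
    | zero =>
      have := hφ.1 n hn'
      simp [h.1.1]
      positivity
    | succ k ih =>
      rw [Finset.sum_range_succ]
      have hk : 1 ≤ 2 ^ k * n := Nat.mul_pos (by positivity) hn
      have q := hq.2 (2 ^ k * n) (2 ^ k * n) hk hk
      have e1 : 2 ^ k * n + 2 ^ k * n = 2 ^ (k + 1) * n := by ring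
      rw [e1] at q
      have a := qlin_add_le h (γ (2 ^ k * n)) (γ (2 ^ k * n)) (2 ^ k • γ n) (2 ^ k • γ n)
      rw [← add_smul, show 2 ^ k + 2 ^ k = 2 ^ (k + 1) by ring] at a
      have t := h.1.2.2 (γ (2 ^ (k + 1) * n)) (γ (2 ^ k * n) + γ (2 ^ k * n)) (2 ^ (k + 1) • γ n)
      set S := ∑ j ∈ Finset.range (k + 1), φ (2 ^ j * n) / 2 ^ j
      have e : (2 : ℝ) ^ (k + 1) * (c * (S + φ (2 ^ (k + 1) * n) / 2 ^ (k + 1))) =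
          2 * (2 ^ k * (c * S)) + c * φ (2 ^ (k + 1) * n) := by
        field_simp
        ring
      rw [e]
      push_cast at q
      linarith
  refine key.trans ?_
  gcongr
  exact qlin_sum hφ n hn' (k + 1)

lemma qlin_unif {Γ : Type*} [AddCommMonoid Γ] {d : Γ → Γ → ℝ}
    (h : IsMetricAbelianMonoid d)
    (hhom : ∀ (n : ℕ) (x y : Γ), d (n • x) (n • y) = (n : ℝ) * d x y)
    {φ : ℝ → ℝ} {D : ℝ} (hφ : AdmissibleWith φ D)
    {γ₁ γ₂ : ℕ → Γ} {c : ℝ} (hc : 0 ≤ c)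
    (h₁ : QuasiLinear d (fun t => c * φ t) γ₁) (h₂ : QuasiLinear d (fun t => c * φ t) γ₂)
    {ε : ℝ} (hε : ∀ᶠ n : ℕ in atTop, d (γ₁ n) (γ₂ n) ≤ ε * n) (n : ℕ) (hn : 1 ≤ n) :
    d (γ₁ n) (γ₂ n) ≤ c * D / 2 * φ n + ε * n := by
  obtain ⟨N, hN⟩ := eventually_atTop.1 hε
  have hNle : N ≤ 2 ^ N * n := (Nat.lt_two_pow_self (n := N)).le.trans (Nat.le_mul_of_pos_right _ hn)
  have b := hN _ hNle
  have q1 := qlin_dyadic h hhom hφ hc h₁ n hn N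
  have q2 := qlin_dyadic h hhom hφ hc h₂ n hn N
  have t1 := h.1.2.2 (2 ^ N • γ₁ n) (γ₁ (2 ^ N * n)) (2 ^ N • γ₂ n)
  have t2 := h.1.2.2 (γ₁ (2 ^ N * n)) (γ₂ (2 ^ N * n)) (2 ^ N • γ₂ n)
  rw [h.1.2.1 (2 ^ N • γ₁ n) (γ₁ (2 ^ N * n)), hhom] at t1
  push_cast at *
  have hp : (0 : ℝ) < 2 ^ N := by positivity
  refine le_of_mul_le_mul_left ?_ hp
  calc _ ≤ _ := t1
    _ ≤ 2 ^ N * (c * (D / 4 * φ n)) + (ε * (2 ^ N * n) + 2 ^ N * (c * (D / 4 * φ n))) := by linarith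
    _ = _ := by ring

/-- If the pseudometric is homogeneous and the uniformly bounded defect
property holds, then the space of quasi-linear sequences with the asymptotic
distance is complete. -/
theorem qlin_complete {Γ : Type*} [AddCommMonoid Γ]
    (d : Γ → Γ → ℝ) (h : IsMetricAbelianMonoid d)
    (hhom : ∀ (n : ℕ) (x y : Γ), d (n • x) (n • y) = (n : ℝ) * d x y)
    (φ : ℝ → ℝ) (hφ : Admissible φ) (hφpos : ∀ t : ℝ, 1 ≤ t → 0 < φ t)
    (C : ℝ) (hC : 0 < C)
    (hubd : ∀ γ : ℕ → Γ, (∃ C' ≥ (0 : ℝ), QuasiLinear d (fun t => C' * φ t) γ) →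
      ∃ γ' : ℕ → Γ, QuasiLinear d (fun t => C * φ t) γ' ∧ dista d γ γ' = 0)
    (γs : ℕ → ℕ → Γ)
    (hγs : ∀ i, ∃ C' ≥ (0 : ℝ), QuasiLinear d (fun t => C' * φ t) (γs i))
    (hcauchy : ∀ ε > (0 : ℝ), ∃ N : ℕ, ∀ i j : ℕ, N ≤ i → N ≤ j →
      dista d (γs i) (γs j) < ε) :
    ∃ η : ℕ → Γ, (∃ C' ≥ (0 : ℝ), QuasiLinear d (fun t => C' * φ t) η) ∧
      Filter.Tendsto (fun i : ℕ => dista d (γs i) η) Filter.atTop (nhds 0) := by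
  obtain ⟨D, hφ⟩ := hφ
  have hD := hφ.2.2.1
  choose c hc0 hcq using hγs
  choose g hg hg0 using fun i => hubd (γs i) ⟨c i, hc0 i, hcq i⟩
  have hγg : ∀ i, ∀ ε > 0, ∀ᶠ n : ℕ in atTop, d (γs i n) (g i n) ≤ ε * n := fun i ε hε =>
    qlin_ev h hφ (hc0 i) hC.le (hcq i) (hg i) (by rw [hg0]; exact hε)
  have hgc : ∀ ε > (0 : ℝ), ∃ N : ℕ, ∀ i j : ℕ, N ≤ i → N ≤ j → ∀ n : ℕ, 1 ≤ n →
      d (g i n) (g j n) ≤ C * D / 2 * φ n + ε * n := by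
    intro ε hε
    obtain ⟨N, hN⟩ := hcauchy (ε / 3) (by positivity)
    refine ⟨N, fun i j hi hj n hn => ?_⟩
    refine qlin_unif h hhom hφ hC.le (hg i) (hg j) ?_ n hn
    filter_upwards [hγg i (ε / 3) (by positivity), hγg j (ε / 3) (by positivity),
      qlin_ev h hφ (hc0 i) (hc0 j) (hcq i) (hcq j) (hN i j hi hj)] with m h1 h2 h3
    have t1 := h.1.2.2 (g i m) (γs i m) (g j m)
    have t2 := h.1.2.2 (γs i m) (γs j m) (g j m)
    rw [h.1.2.1 (g i m) (γs i m)] at t1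
    linarith
  have hφ1 := hφpos 1 le_rfl
  choose! N hN using hgc
  -- index function
  let ι : ℕ → ℕ := fun n => n + ∑ k ∈ Finset.range (n + 1), N (φ 1 / k)
  have hι1 : ∀ n, n ≤ ι n := fun n => Nat.le_add_right _ _
  have hι2 : ∀ m n : ℕ, m ≤ n → N (φ 1 / m) ≤ ι n := by
    intro m n hmn
    have : N (φ 1 / m) ≤ ∑ k ∈ Finset.range (n + 1), N (φ 1 / k) :=
      Finset.single_le_sum (f := fun k : ℕ => N (φ 1 / k)) (fun _ _ => Nat.zero_le _)
        (Finset.mem_range.2 (by omega))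
    exact this.trans (Nat.le_add_left _ _)
  have hη : ∀ m n : ℕ, 1 ≤ m → m ≤ n →
      d (g (ι n) m) (g (ι m) m) ≤ C * D / 2 * φ m + φ 1 := by
    intro m n hm hmn
    have hm' : (0 : ℝ) < m := by exact_mod_cast hm
    have := hN (φ 1 / m) (by positivity) (ι n) (ι m) (hι2 m n hmn) (hι2 m m le_rfl) m hm
    rwa [div_mul_cancel₀ _ hm'.ne'] at this
  refine ⟨fun n => g (ι n) n, ⟨C + C * D + 2, by positivity, (hg _).1, ?_⟩, ?_⟩
  · intro m n hm hn
    have e1 := (hg (ι (m + n))).2 m n hm hn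
    have e2 := hη m (m + n) hm (by omega)
    have e3 := hη n (m + n) hn (by omega)
    have e4 := qlin_add_le h (g (ι (m + n)) m) (g (ι (m + n)) n) (g (ι m) m) (g (ι n) n)
    have e5 := h.1.2.2 (g (ι (m + n)) (m + n)) (g (ι (m + n)) m + g (ι (m + n)) n)
      (g (ι m) m + g (ι n) n)
    have hmono : ∀ k : ℕ, 1 ≤ k → k ≤ m + n → φ k ≤ φ ((m + n : ℕ) : ℝ) := by
      intro k h1 h2
      have h1' : (1 : ℝ) ≤ k := by exact_mod_cast h1
      have h2' : (k : ℝ) ≤ (m + n : ℕ) := by exact_mod_cast h2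
      exact hφ.2.1 (Set.mem_Ici.2 h1') (Set.mem_Ici.2 (h1'.trans h2')) h2'
    have f1 := hmono 1 le_rfl (by omega)
    have hCD : 0 ≤ C * D / 2 := by positivity
    have f2 := mul_le_mul_of_nonneg_left (hmono m hm (by omega)) hCD
    have f3 := mul_le_mul_of_nonneg_left (hmono n hn (by omega)) hCD
    simp only [Nat.cast_one] at *
    linarith
  · rw [Metric.tendsto_atTop]
    intro ε hε
    refine ⟨N (ε / 4), fun j hj => ?_⟩
    have hsub := (qlin_sublinear hφ).const_mul (C * D / 2)
    rw [mul_zero] at hsub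
    have hev : ∀ᶠ n : ℕ in atTop, d (γs j n) (g (ι n) n) / n ≤ 3 * ε / 4 := by
      filter_upwards [hγg j (ε / 4) (by positivity), eventually_ge_atTop 1,
        eventually_ge_atTop (N (ε / 4)),
        hsub.eventually_lt_const (show 0 < ε / 4 by positivity)] with n h1 h2 h3 h4
      have hn : (0 : ℝ) < n := by exact_mod_cast h2
      have q := hN (ε / 4) (by positivity) j (ι n) hj (h3.trans (hι1 n)) n h2
      have t := h.1.2.2 (γs j n) (g j n) (g (ι n) n)
      rw [← mul_div_assoc, div_lt_iff₀ hn] at h4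
      rw [div_le_iff₀ hn]
      linarith
    have hnn : ∀ n : ℕ, 0 ≤ d (γs j n) (g (ι n) n) / n := fun n =>
      div_nonneg (qlin_nonneg h.1 _ _) (Nat.cast_nonneg _)
    have hbd : IsBoundedUnder (· ≤ ·) atTop (fun n : ℕ => d (γs j n) (g (ι n) n) / n) :=
      ⟨_, eventually_map.2 hev⟩
    have hcb : IsBoundedUnder (· ≥ ·) atTop (fun n : ℕ => d (γs j n) (g (ι n) n) / n) :=
      isBoundedUnder_of ⟨0, hnn⟩
    have hle : dista d (γs j) (fun n => g (ι n) n) ≤ 3 * ε / 4 :=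
      limsup_le_of_le hcb.isCoboundedUnder_le hev
    have hge : 0 ≤ dista d (γs j) (fun n => g (ι n) n) :=
      le_limsup_of_frequently_le (Eventually.of_forall hnn).frequently hbd
    rw [Real.dist_eq, sub_zero, abs_of_nonneg hge]
    linarith
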